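/- A finite bipartite graph G = (S ∪ Q, E) has an ordering of the questions satisfying the interval property if and only if it has an ordering of the students satisfying the nested property. -/

import Mathlib

open Finset

/-- The neighborhood of a student `s` in the bipartite graph with edge set `E`. -/
def nbhd {S Q : Type*} [Fintype Q] [DecidableEq S] [DecidableEq Q]
    (E : Finset (S × Q)) (s : S) : Finset Q :=
  Finset.univ.filter fun q => (s, q) ∈ E

/-- The `j` easiest questions under the ordering `β` (`j ∈ {0, …, |Q|}`). -/
def prefixSet {Q : Type*} [Fintype Q] [DecidableEq Q]
    (β : Q ≃ Fin (Fintype.card Q)) (j : ℕ) : Finset Q :=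
  Finset.univ.filter fun q => (β q : ℕ) < j

/-!
Both properties say that the neighborhoods of the students form a chain under inclusion. Sorting
the students along such a chain gives the nested ordering. For the interval property, two
incomparable neighborhoods `N(s₁)`, `N(s₂)` and two incomparable non-neighborhoods
`{s | q₁ ∉ N(s)}`, `{s | q₂ ∉ N(s)}` are witnessed by the same obstruction, students `s₁`, `s₂` and
questions `q₁`, `q₂` with `q₁ ∈ N(s₁) \ N(s₂)` and `q₂ ∈ N(s₂) \ N(s₁)`. So the non-neighborhoods
of the questions form a chain as well, and an ordering of the questions is sorted along this chain
exactly when every `N(s)` is an initial segment of it.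
-/

theorem exists_equivFin_le_imp_le {ι P : Type*} [Fintype ι] [LinearOrder P] (f : ι → P) :
    ∃ e : ι ≃ Fin (Fintype.card ι), ∀ i j, e i ≤ e j → f i ≤ f j := by
  let e₀ := Fintype.equivFin ι
  refine ⟨e₀.trans (Tuple.sort (f ∘ e₀.symm)).symm, fun i j hij => ?_⟩
  simpa using Tuple.monotone_sort (f ∘ e₀.symm) hij

theorem exists_equivFin_le_imp_le_iff_isChain_range {ι P : Type*} [Fintype ι] [PartialOrder P]
    (f : ι → P) :
    (∃ e : ι ≃ Fin (Fintype.card ι), ∀ i j, e i ≤ e j → f i ≤ f j) ↔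
      IsChain (· ≤ ·) (Set.range f) := by
  constructor
  · rintro ⟨e, he⟩ _ ⟨i, rfl⟩ _ ⟨j, rfl⟩ -
    exact (le_total (e i) (e j)).imp (he i j) (he j i)
  · intro hf
    obtain ⟨e, he⟩ := exists_equivFin_le_imp_le (toLinearExtension ∘ f)
    refine ⟨e, fun i j hij => ?_⟩
    rcases hf.total (Set.mem_range_self i) (Set.mem_range_self j) with hle | hge
    · exact hle
    · have heq : toLinearExtension (f i) = toLinearExtension (f j) :=
        le_antisymm (he i j hij) (toLinearExtension.monotone hge)
      -- `LinearExtension P` is a type synonym of `P`, with `toLinearExtension` the identity.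
      exact le_of_eq heq

/-- The indices of the members of the family `A` that miss the point `x`. For `A` the family of
neighborhoods of the students, this is the set of students not adjacent to the question `x`;
passing to non-neighbors makes the easiest questions the smallest under inclusion. -/
def indicesAvoiding {ι X : Type*} (A : ι → Set X) (x : X) : Set ι :=
  {i | x ∉ A i}

theorem indicesAvoiding_subset_indicesAvoiding_iff {ι X : Type*} {A : ι → Set X} {x y : X} :
    indicesAvoiding A x ⊆ indicesAvoiding A y ↔ ∀ i, y ∈ A i → x ∈ A i :=
  forall_congr' fun _ => not_imp_not

theorem isChain_range_indicesAvoiding_iff {ι X : Type*} {A : ι → Set X} :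
    IsChain (· ⊆ ·) (Set.range (indicesAvoiding A)) ↔ IsChain (· ⊆ ·) (Set.range A) := by
  constructor
  · rintro hA _ ⟨i, rfl⟩ _ ⟨j, rfl⟩ -
    by_contra! h
    obtain ⟨⟨x, hxi, hxj⟩, y, hyj, hyi⟩ := h.imp Set.not_subset.mp Set.not_subset.mp
    rcases hA.total (Set.mem_range_self x) (Set.mem_range_self y) with hxy | hyx
    · exact hxy hxj hyj
    · exact hyx hyi hxi
  · rintro hA _ ⟨x, rfl⟩ _ ⟨y, rfl⟩ -
    by_contra! h
    simp only [indicesAvoiding_subset_indicesAvoiding_iff, not_forall] at h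
    obtain ⟨⟨i, hyi, hxi⟩, j, hxj, hyj⟩ := h
    rcases hA.total (Set.mem_range_self i) (Set.mem_range_self j) with hij | hji
    · exact hyj (hij hyi)
    · exact hxi (hji hxj)

theorem isLowerSet_fin_iff_exists_eq_val_lt {n : ℕ} {t : Set (Fin n)} :
    IsLowerSet t ↔ ∃ j ≤ n, t = {i : Fin n | (i : ℕ) < j} := by
  constructor
  · intro ht
    rcases ht.eq_univ_or_Iio with rfl | ⟨a, rfl⟩
    · exact ⟨n, le_rfl, by simp⟩
    · exact ⟨a, a.isLt.le, rfl⟩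
  · rintro ⟨j, -, rfl⟩ a b hba ha
    exact (Fin.le_def.mp hba).trans_lt ha

theorem exists_eq_prefixSet_iff {Q : Type*} [Fintype Q] [DecidableEq Q]
    (β : Q ≃ Fin (Fintype.card Q)) (T : Finset Q) :
    (∃ j ≤ Fintype.card Q, T = prefixSet β j) ↔ ∀ q q', β q ≤ β q' → q' ∈ T → q ∈ T := by
  have eq_prefixSet_iff (j : ℕ) :
      T = prefixSet β j ↔ β.symm ⁻¹' T = {i : Fin (Fintype.card Q) | (i : ℕ) < j} := by
    simp [Finset.ext_iff, Set.ext_iff, β.symm.forall_congr_left, prefixSet]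
  simp only [eq_prefixSet_iff, ← isLowerSet_fin_iff_exists_eq_val_lt]
  simp only [IsLowerSet, β.symm.forall_congr_left, Equiv.symm_symm, Set.mem_preimage,
    Equiv.symm_apply_apply, Finset.mem_coe]
  exact forall_comm

theorem exists_interval_ordering_iff_isChain_range {ι Q : Type*} [Fintype Q] [DecidableEq Q]
    (A : ι → Finset Q) :
    (∃ β : Q ≃ Fin (Fintype.card Q), ∀ i, ∃ j ≤ Fintype.card Q, A i = prefixSet β j) ↔
      IsChain (· ⊆ ·) (Set.range fun i => (A i : Set Q)) := by
  rw [← isChain_range_indicesAvoiding_iff, ← exists_equivFin_le_imp_le_iff_isChain_range]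
  refine exists_congr fun β => ?_
  simp only [exists_eq_prefixSet_iff, indicesAvoiding_subset_indicesAvoiding_iff, Finset.mem_coe]
  exact ⟨fun h q q' hq i => h i q q' hq, fun h i q q' hq => h q q' hq i⟩

theorem exists_nested_ordering_iff_isChain_range {ι Q : Type*} [Fintype ι] (A : ι → Finset Q) :
    (∃ α : ι ≃ Fin (Fintype.card ι), ∀ i j, α j ≤ α i → A j ⊆ A i) ↔
      IsChain (· ⊆ ·) (Set.range fun i => (A i : Set Q)) := by
  rw [← exists_equivFin_le_imp_le_iff_isChain_range]
  simp only [Finset.coe_subset]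
  exact exists_congr fun _ => forall_comm

/-- A finite bipartite graph has an ordering of the questions satisfying the interval
property iff it has an ordering of the students satisfying the nested property. -/
theorem stmt2 {S Q : Type*} [Fintype S] [Fintype Q] [DecidableEq S] [DecidableEq Q]
    (E : Finset (S × Q)) :
    (∃ β : Q ≃ Fin (Fintype.card Q),
        ∀ s : S, ∃ j ≤ Fintype.card Q, nbhd E s = prefixSet β j) ↔
    (∃ α : S ≃ Fin (Fintype.card S),
        ∀ s₁ s₂ : S, α s₂ ≤ α s₁ → nbhd E s₂ ⊆ nbhd E s₁) := by
  rw [exists_interval_ordering_iff_isChain_range, exists_nested_ordering_iff_isChain_range]
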